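/- Let X_A ⊂ S^ℤ be a topologically mixing subshift of finite type and μ = μ_{(P_n : n ∈ ℤ)} a Markov measure on X_A satisfying the Doeblin condition. If the left shift T is nonsingular with respect to μ, then for all s,t ∈ S: P_{n−1}(s,t) − P_n(s,t) → 0 as n → ∞, and P̂_{−n}(s,t) − P̂_{−(n+1)}(s,t) → 0 as n → ∞. -/

import Mathlib

/-!
Centre the event `x_{n+1} = t` on the event `x_n = s`: the functions
`f_n(x) = 1[x_n = s] * (1[x_{n+1} = t] - P_n(s,t))` are bounded, and they are pairwise orthogonal in
`L²(μ)` because past and future are conditionally independent given the present. By Bessel's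
inequality `∫ f_n g dμ → 0` for indicators `g`, and by density for all integrable `g`, in particular
for the density of any finite `ν ≪ μ`; hence the `ν`- and `μ`-conditional probabilities of
`x_{n+1} = t` given `x_n = s` merge, as long as `ν(x_n = s)` stays away from zero. When `ν` is the
image of `μ` under the shift, these are `P_{n+1}(s,t)` and `P_n(s,t)`. The Markov property is
symmetric in time, so the same argument with `x_{-n-1}` in place of `x_{n+1}` gives the claim on the
reverse transition matrices. Finally, primitivity and the Doeblin condition bound `π_n(s)` from
below: in `M` steps every state is reached from every other with probability at least `δ^M`.
-/

open MeasureTheory Filter Topology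

namespace MarkovSFT

/-- The space of two-sided sequences over `S`. -/
abbrev Seq (S : Type*) := ℤ → S

/-- The shift by `n`: `(T^n x)_k = x_{k+n}`. -/
def shiftZ {S : Type*} (n : ℤ) (x : Seq S) : Seq S := fun k => x (k + n)

/-- The left shift `T`. -/
def shiftMap {S : Type*} : Seq S → Seq S := shiftZ 1

/-- The subshift of finite type determined by the adjacency matrix `A`. -/
def SFT {S : Type*} (A : S → S → Bool) : Set (Seq S) :=
  {x | ∀ n : ℤ, A (x n) (x (n + 1)) = true}

/-- `A` is primitive: all entries of `A^M` are positive for some `M ≥ 1`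
(expressed via the existence of admissible paths of length `M`). -/
def IsPrimitive {S : Type*} (A : S → S → Bool) : Prop :=
  ∃ M : ℕ, 1 ≤ M ∧ ∀ s t : S, ∃ u : ℕ → S,
    u 0 = s ∧ u M = t ∧ ∀ i < M, A (u i) (u (i + 1)) = true

/-- A stochastic matrix over the finite state space `S`. -/
def IsStochastic {S : Type*} [Fintype S] (P : S → S → ℝ) : Prop :=
  (∀ s t, 0 ≤ P s t) ∧ ∀ s, ∑ t, P s t = 1

/-- The Doeblin condition for the family of transition matrices `P` relative to `A`. -/
def Doeblin {S : Type*} (A : S → S → Bool) (P : ℤ → S → S → ℝ) : Prop :=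
  ∃ δ : ℝ, 0 < δ ∧ ∀ (n : ℤ) (s t : S), δ ≤ P n s t ↔ A s t = true

/-- `μ` is the Markov measure on the SFT `X_A` determined by the transition
matrices `(P n)` and coordinate distributions `(π n)`. -/
structure IsMarkovMeasure {S : Type*} [Fintype S] [MeasurableSpace S]
    (μ : Measure (Seq S)) (A : S → S → Bool)
    (P : ℤ → S → S → ℝ) (π : ℤ → S → ℝ) : Prop where
  isProb : IsProbabilityMeasure μ
  stochastic : ∀ n, IsStochastic (P n)
  compat : ∀ (n : ℤ) (s t : S), A s t = false → P n s t = 0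
  dist_nonneg : ∀ (n : ℤ) (s : S), 0 ≤ π n s
  dist_sum : ∀ n : ℤ, ∑ s, π n s = 1
  consistent : ∀ (n : ℤ) (t : S), ∑ s, π n s * P n s t = π (n + 1) t
  supp : μ (SFT A) = 1
  cylinder : ∀ (k : ℤ) (m : ℕ) (w : Fin (m + 1) → S),
    μ {x | ∀ i : Fin (m + 1), x (k + 1 + ((i : ℕ) : ℤ)) = w i}
      = ENNReal.ofReal (π (k + 1) (w 0) *
          ∏ i : Fin m, P (k + 1 + ((i : ℕ) : ℤ)) (w i.castSucc) (w i.succ))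

/-- The left shift is nonsingular with respect to `μ`:
`μ` and `μ ∘ T⁻¹` are mutually absolutely continuous. -/
def ShiftNonsingular {S : Type*} [Fintype S] [MeasurableSpace S]
    (μ : Measure (Seq S)) : Prop :=
  Measure.map (shiftMap (S := S)) μ ≪ μ ∧ μ ≪ Measure.map (shiftMap (S := S)) μ

/-- The left shift is conservative with respect to `μ`. -/
def ShiftConservative {S : Type*} [Fintype S] [MeasurableSpace S]
    (μ : Measure (Seq S)) : Prop :=
  ∀ E : Set (Seq S), MeasurableSet E → 0 < μ E →
    ∃ n : ℕ, 1 ≤ n ∧ 0 < μ (E ∩ (shiftMap (S := S))^[n] ⁻¹' E)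

/-- An element of the pseudo full-group `[[T]]` of the shift, together with
(a version of) the logarithm of its Radon–Nikodym derivative `log dμ∘V/dμ`. -/
structure PFG {S : Type*} [Fintype S] [MeasurableSpace S] (μ : Measure (Seq S)) where
  dom : Set (Seq S)
  toFun : Seq S → Seq S
  logDeriv : Seq S → ℝ
  meas_dom : MeasurableSet dom
  meas_toFun : Measurable toFun
  meas_logDeriv : Measurable logDeriv
  injOn : Set.InjOn toFun dom
  orbit : ∀ᵐ x ∂μ.restrict dom, ∃ n : ℤ, toFun x = shiftZ n x
  deriv_spec : ∀ E : Set (Seq S), E ⊆ dom → MeasurableSet E →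
    μ (toFun '' E) = ∫⁻ x in E, ENNReal.ofReal (Real.exp (logDeriv x)) ∂μ

/-- `r` is an essential value of (the Radon–Nikodym cocycle of) the shift on `(X, μ)`. -/
def IsEssentialValue {S : Type*} [Fintype S] [MeasurableSpace S]
    (μ : Measure (Seq S)) (r : ℝ) : Prop :=
  ∀ E : Set (Seq S), MeasurableSet E → 0 < μ E → ∀ ε : ℝ, 0 < ε →
    ∃ g : PFG μ,
      0 < μ (E ∩ g.dom ∩ g.toFun ⁻¹' E ∩ {x | |g.logDeriv x - r| < ε})

end MarkovSFT
namespace MarkovSFT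

/-- The reverse transition matrices `P̂_n(s,t) = π_{n-1}(t) P_{n-1}(t,s) / π_n(s)`. -/
noncomputable def reverseP {S : Type*} (P : ℤ → S → S → ℝ) (π : ℤ → S → ℝ)
    (n : ℤ) (s t : S) : ℝ :=
  if 0 < π n s then π (n - 1) t * P (n - 1) t s / π n s else 0

open ProbabilityTheory

section WeakConvergence

lemma tendsto_inner_cofinite_of_pairwise_orthogonal {𝕜 E ι : Type*} [RCLike 𝕜]
    [NormedAddCommGroup E] [InnerProductSpace 𝕜 E] {v : ι → E} {R : ℝ} (hR : ∀ i, ‖v i‖ ≤ R)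
    (hv : Pairwise fun i j => inner 𝕜 (v i) (v j) = 0) (x : E) :
    Tendsto (fun i => inner 𝕜 x (v i)) cofinite (𝓝 0) := by
  let e : {i // v i ≠ 0} → E := fun i => (‖v i‖⁻¹ : 𝕜) • v i
  have he : Orthonormal 𝕜 e :=
    ⟨fun i => norm_smul_inv_norm i.2, fun i j hij => by
      simp [e, inner_smul_left, inner_smul_right, hv (Subtype.coe_ne_coe.2 hij)]⟩
  have hsum : Summable fun i => ‖inner 𝕜 x (v i)‖ ^ 2 := by
    rw [← Subtype.val_injective (p := fun i => v i ≠ 0) |>.summable_iff fun i hi => by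
      simp [show v i = 0 by simpa using hi]]
    refine ((he.inner_products_summable x).mul_left (R ^ 2)).of_nonneg_of_le
      (fun _ => sq_nonneg _) fun i => ?_
    have hvi : v i = (‖v i‖ : 𝕜) • e i := by simp [e, smul_smul, norm_ne_zero_iff.2 i.2]
    rw [← mul_pow, Function.comp_apply, hvi, inner_smul_right, norm_mul, RCLike.norm_ofReal,
      abs_norm, norm_inner_symm]
    gcongr
    exact hR i
  rw [tendsto_zero_iff_norm_tendsto_zero]
  simpa using hsum.tendsto_cofinite_zero.sqrt

variable {X ι : Type*} [MeasurableSpace X] {μ ν : Measure X} {f : ι → X → ℝ} {R : NNReal}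

lemma lipschitzWith_integral_mul {f : X → ℝ} (hf : AEStronglyMeasurable f μ)
    (hR : ∀ᵐ x ∂μ, ‖f x‖ ≤ R) :
    LipschitzWith R fun g : X →₁[μ] ℝ => ∫ x, g x * f x ∂μ := by
  have hint (g : X →₁[μ] ℝ) : Integrable (fun x => g x * f x) μ :=
    (L1.integrable_coeFn g).mul_bdd hf hR
  refine .of_dist_le_mul fun g h => ?_
  rw [dist_eq_norm, dist_eq_norm, ← integral_sub (hint g) (hint h), L1.norm_eq_integral_norm,
    ← integral_const_mul]
  refine norm_integral_le_of_norm_le ((L1.integrable_coeFn _).norm.const_mul _) ?_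
  filter_upwards [hR, Lp.coeFn_sub g h] with x hx hgh
  rw [hgh, Pi.sub_apply, ← sub_mul, norm_mul, mul_comm]
  gcongr

lemma tendsto_integral_mul_of_tendsto_setIntegral {l : Filter ι}
    (hf : ∀ i, AEStronglyMeasurable (f i) μ) (hR : ∀ i, ∀ᵐ x ∂μ, ‖f i x‖ ≤ R)
    (h : ∀ E, MeasurableSet E → μ E < ⊤ → Tendsto (fun i => ∫ x in E, f i x ∂μ) l (𝓝 0))
    {g : X → ℝ} (hg : Integrable g μ) : Tendsto (fun i => ∫ x, g x * f i x ∂μ) l (𝓝 0) := by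
  refine Integrable.induction (P := fun g => Tendsto (fun i => ∫ x, g x * f i x ∂μ) l (𝓝 0))
    (fun c E hE hμE => ?_) (fun g₁ g₂ _ hg₁ hg₂ ih₁ ih₂ => ?_) ?_ (fun g g' hgg' _ ih => ?_) hg
  · simpa [← Set.indicator_mul_left, integral_indicator hE, integral_const_mul]
      using (h _ hE hμE).const_mul c
  · have hint {g : X → ℝ} (hg : Integrable g μ) (i : ι) := hg.mul_bdd (hf i) (hR i)
    simpa [add_mul, integral_add (hint hg₁ _) (hint hg₂ _)] using ih₁.add ih₂
  · have hlip i := lipschitzWith_integral_mul (hf i) (hR i)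
    exact (LipschitzWith.uniformEquicontinuous _ _ hlip).equicontinuous.isClosed_setOfPred_tendsto
      continuous_const
  · exact ih.congr fun i => integral_congr_ae (hgg'.mul .rfl)

lemma tendsto_setIntegral_cofinite_of_pairwise_orthogonal [IsFiniteMeasure μ]
    (hf : ∀ i, AEStronglyMeasurable (f i) μ) (hR : ∀ i, ∀ᵐ x ∂μ, ‖f i x‖ ≤ R)
    (horth : Pairwise fun i j => ∫ x, f i x * f j x ∂μ = 0) {E : Set X} (hE : MeasurableSet E) :
    Tendsto (fun i => ∫ x in E, f i x ∂μ) cofinite (𝓝 0) := by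
  have hL2 (i : ι) : MemLp (f i) 2 μ := .of_bound (hf i) R (hR i)
  have hbound (i : ι) := Lp.norm_le_of_ae_bound R.2
    ((hL2 i).coeFn_toLp.mp ((hR i).mono fun x hx h => (congrArg norm h).trans_le hx))
  have hinner (i j : ι) : inner ℝ (hL2 i).toLp (hL2 j).toLp = ∫ x, f i x * f j x ∂μ := by
    rw [L2.inner_def]
    refine integral_congr_ae ?_
    filter_upwards [(hL2 i).coeFn_toLp, (hL2 j).coeFn_toLp] with x hi hj
    rw [hi, hj, Real.inner_apply]
  refine (tendsto_inner_cofinite_of_pairwise_orthogonal (𝕜 := ℝ) hbound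
    (fun i j hij => (hinner i j).trans (horth hij))
    (indicatorConstLp 2 hE (measure_ne_top μ E) 1)).congr fun i => ?_
  rw [L2.inner_indicatorConstLp_one]
  exact setIntegral_congr_ae hE ((hL2 i).coeFn_toLp.mono fun x hx _ => hx)

lemma tendsto_integral_cofinite_of_pairwise_orthogonal [IsFiniteMeasure μ] [IsFiniteMeasure ν]
    (hνμ : ν ≪ μ) (hf : ∀ i, AEStronglyMeasurable (f i) μ) (hR : ∀ i, ∀ᵐ x ∂μ, ‖f i x‖ ≤ R)
    (horth : Pairwise fun i j => ∫ x, f i x * f j x ∂μ = 0) :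
    Tendsto (fun i => ∫ x, f i x ∂ν) cofinite (𝓝 0) := by
  simp only [← integral_rnDeriv_smul hνμ, smul_eq_mul]
  exact tendsto_integral_mul_of_tendsto_setIntegral hf hR
    (fun E hE _ => tendsto_setIntegral_cofinite_of_pairwise_orthogonal hf hR horth hE)
    Measure.integrable_toReal_rnDeriv

end WeakConvergence

section Conditioning

variable {X : Type*} [MeasurableSpace X] {μ ν : Measure X} {B C : Set X}

lemma real_cond_mul_eq_real_inter [IsFiniteMeasure μ] (hB : MeasurableSet B) (C : Set X) :
    μ[|B].real C * μ.real B = μ.real (B ∩ C) := by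
  simp only [measureReal_def, ← ENNReal.toReal_mul, cond_mul_eq_inter hB]

lemma indepSets_cond_of_real_inter [IsFiniteMeasure μ] {p₁ p₂ : Set (Set X)}
    (hB : MeasurableSet B) (h : ∀ U ∈ p₁, ∀ V ∈ p₂,
      μ.real (B ∩ (U ∩ V)) * μ.real B = μ.real (B ∩ U) * μ.real (B ∩ V)) :
    IndepSets p₁ p₂ μ[|B] := by
  rw [IndepSets_iff]
  intro U V hU hV
  rcases eq_or_ne (μ.real B) 0 with h0 | h0
  · rw [measureReal_eq_zero_iff] at h0
    simp [cond_eq_zero_of_meas_eq_zero h0]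
  suffices hreal : μ[|B].real (U ∩ V) = μ[|B].real U * μ[|B].real V by
    rwa [← ENNReal.toReal_eq_toReal_iff' (by finiteness) (by finiteness), ENNReal.toReal_mul]
  have hUV := h U hU V hV
  simp only [← real_cond_mul_eq_real_inter hB] at hUV
  refine mul_right_cancel₀ (mul_ne_zero h0 h0) ?_
  linear_combination hUV

/-- The function `1_B * (1_C - μ(C | B))`. It has mean zero under `μ`, and its mean under another
measure `ν` is `ν B` times the difference of the conditional probabilities of `C` given `B`. -/
noncomputable def centeredIndicator (μ : Measure X) (B C : Set X) : X → ℝ :=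
  B.indicator fun x => C.indicator 1 x - μ[|B].real C

lemma measurable_centeredIndicator (hB : MeasurableSet B) (hC : MeasurableSet C) :
    Measurable (centeredIndicator μ B C) :=
  ((measurable_one.indicator hC).sub_const _).indicator hB

lemma norm_centeredIndicator_le_one (x : X) : ‖centeredIndicator μ B C x‖ ≤ 1 := by
  refine (norm_indicator_le_norm_self _ x).trans ?_
  have hle : μ[|B].real C ≤ 1 := measureReal_le_one
  have hnonneg : 0 ≤ μ[|B].real C := measureReal_nonneg
  by_cases hx : x ∈ C <;> simp only [hx, Set.indicator_of_mem, Set.indicator_of_notMem,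
      not_false_eq_true, Pi.one_apply, Real.norm_eq_abs, abs_le] <;> constructor <;> linarith

lemma integral_centeredIndicator [IsFiniteMeasure ν] (hB : MeasurableSet B)
    (hC : MeasurableSet C) :
    ∫ x, centeredIndicator μ B C x ∂ν = ν.real (B ∩ C) - μ[|B].real C * ν.real B := by
  have hint : Integrable (C.indicator (1 : X → ℝ)) (ν.restrict B) :=
    (integrable_const 1).indicator hC
  rw [centeredIndicator, integral_indicator hB, integral_sub hint (integrable_const _),
    integral_indicator_one hC, measureReal_restrict_apply hC]
  simp [Set.inter_comm, mul_comm]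

lemma setIntegral_centeredIndicator_eq_zero [IsFiniteMeasure μ] (hB : MeasurableSet B)
    (hC : MeasurableSet C) {E : Set X} (h : IndepSet C E μ[|B]) :
    ∫ x in E, centeredIndicator μ B C x ∂μ = 0 := by
  have hindep : μ[|B].real (C ∩ E) = μ[|B].real C * μ[|B].real E := by
    simp [measureReal_def, h.measure_inter_eq_mul]
  rw [integral_centeredIndicator hB hC, measureReal_restrict_apply (hB.inter hC),
    measureReal_restrict_apply hB, Set.inter_assoc,
    ← real_cond_mul_eq_real_inter hB, ← real_cond_mul_eq_real_inter hB, hindep]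
  ring

lemma integral_centeredIndicator_mul_eq_zero [IsFiniteMeasure μ] {B' C' : Set X}
    (hB : MeasurableSet B) (hC : MeasurableSet C)
    (hB' : MeasurableSet B') (hC' : MeasurableSet C')
    (hindB : IndepSet C B' μ[|B]) (hindC : IndepSet C (B' ∩ C') μ[|B]) :
    ∫ x, centeredIndicator μ B C x * centeredIndicator μ B' C' x ∂μ = 0 := by
  have hint : Integrable (centeredIndicator μ B C) μ :=
    .of_bound (measurable_centeredIndicator hB hC).aestronglyMeasurable 1
      (.of_forall norm_centeredIndicator_le_one)
  have hexpand (x : X) : centeredIndicator μ B C x * centeredIndicator μ B' C' x =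
      (B' ∩ C').indicator (centeredIndicator μ B C) x -
        μ[|B'].real C' * B'.indicator (centeredIndicator μ B C) x := by
    by_cases hxB : x ∈ B' <;> by_cases hxC : x ∈ C' <;>
      simp [centeredIndicator, hxB, hxC] <;> ring
  simp only [hexpand]
  rw [integral_sub (hint.indicator (hB'.inter hC')) ((hint.indicator hB').const_mul _),
    integral_const_mul, integral_indicator (hB'.inter hC'), integral_indicator hB',
    setIntegral_centeredIndicator_eq_zero hB hC hindC,
    setIntegral_centeredIndicator_eq_zero hB hC hindB, mul_zero, sub_zero]

lemma tendsto_real_cond_sub_real_cond {ι : Type*} [LinearOrder ι] [IsFiniteMeasure μ]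
    [IsFiniteMeasure ν] (hνμ : ν ≪ μ) {B C : ι → Set X}
    (hB : ∀ i, MeasurableSet (B i)) (hC : ∀ i, MeasurableSet (C i))
    (hindB : ∀ i j, i < j → IndepSet (C j) (B i) μ[|B j])
    (hindC : ∀ i j, i < j → IndepSet (C j) (B i ∩ C i) μ[|B j])
    {c : ℝ} (hc : 0 < c) (hνB : ∀ i, c ≤ ν.real (B i)) :
    Tendsto (fun i => ν[|B i].real (C i) - μ[|B i].real (C i)) cofinite (𝓝 0) := by
  have horth : Pairwise fun i j =>
      ∫ x, centeredIndicator μ (B i) (C i) x * centeredIndicator μ (B j) (C j) x ∂μ = 0 := by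
    intro i j hij
    rcases hij.lt_or_gt with hlt | hgt
    · simp only [mul_comm (centeredIndicator μ (B i) (C i) _)]
      exact integral_centeredIndicator_mul_eq_zero (hB j) (hC j) (hB i) (hC i) (hindB i j hlt)
        (hindC i j hlt)
    · exact integral_centeredIndicator_mul_eq_zero (hB i) (hC i) (hB j) (hC j) (hindB j i hgt)
        (hindC j i hgt)
  have hlim : Tendsto (fun i => ∫ x, centeredIndicator μ (B i) (C i) x ∂ν) cofinite (𝓝 0) :=
    tendsto_integral_cofinite_of_pairwise_orthogonal hνμ (R := 1)
      (fun i => (measurable_centeredIndicator (hB i) (hC i)).aestronglyMeasurable)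
      (fun i => .of_forall norm_centeredIndicator_le_one) horth
  refine squeeze_zero_norm (fun i => ?_) (by simpa using hlim.norm.div_const c)
  rw [le_div_iff₀ hc, integral_centeredIndicator (hB i) (hC i),
    ← real_cond_mul_eq_real_inter (hB i), ← sub_mul, Real.norm_eq_abs, abs_mul]
  gcongr
  exact (hνB i).trans (le_abs_self _)

end Conditioning

section Agreement

variable {ι S : Type*}

/-- The cylinder event that a configuration agrees with `y` on the index set `I`. The values of `y`
off `I` are irrelevant: configurations are total so that those on different index sets can be glued
without dependent types. -/
def agreeOn (I : Set ι) (y : ι → S) : Set (ι → S) :=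
  {x | Set.EqOn x y I}

lemma agreeOn_congr {I : Set ι} {x y : ι → S} (h : Set.EqOn x y I) :
    agreeOn I x = agreeOn I y :=
  Set.ext fun _ => ⟨fun hz => hz.trans h, fun hz => hz.trans h.symm⟩

lemma agreeOn_inter_agreeOn (I J : Set ι) (y : ι → S) :
    agreeOn I y ∩ agreeOn J y = agreeOn (I ∪ J) y :=
  Set.ext fun _ => Set.eqOn_union.symm

lemma measurableSet_cylinderEvents_coord [MeasurableSpace S] [MeasurableSingletonClass S]
    {I : Set ι} {i : ι} (hi : i ∈ I) (s : S) :
    MeasurableSet[cylinderEvents I] {x : ι → S | x i = s} :=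
  (measurable_cylinderEvent_apply hi : Measurable[cylinderEvents I] fun x : ι → S => x i)
    (measurableSet_singleton s)

lemma measurableSet_coord [MeasurableSpace S] [MeasurableSingletonClass S] (i : ι) (s : S) :
    MeasurableSet {x : ι → S | x i = s} :=
  cylinderEvents_le_pi _ (measurableSet_cylinderEvents_coord (Set.mem_singleton i) s)

lemma coord_inter_agreeOn_of_eq {I : Set ι} {i : ι} (hi : i ∈ I) {y : ι → S} {s : S}
    (hs : y i = s) : {x | x i = s} ∩ agreeOn I y = agreeOn I y :=
  Set.inter_eq_right.2 fun _ hx => (hx hi).trans hs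

lemma coord_inter_agreeOn_of_ne {I : Set ι} {i : ι} (hi : i ∈ I) {y : ι → S} {s : S}
    (hs : y i ≠ s) : {x | x i = s} ∩ agreeOn I y = ∅ :=
  Set.eq_empty_of_forall_notMem fun _ hx => hs ((hx.2 hi).symm.trans hx.1)

/-- The cylinder events on index sets in `𝓘`, the natural generators of the σ-algebra of the
coordinates in `⋃₀ 𝓘`. -/
def agreementEvents (S : Type*) (𝓘 : Set (Set ι)) : Set (Set (ι → S)) :=
  {U | ∃ I ∈ 𝓘, ∃ y, agreeOn I y = U}

lemma isPiSystem_agreementEvents {𝓘 : Set (Set ι)} (h𝓘 : SupClosed 𝓘) :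
    IsPiSystem (agreementEvents S 𝓘) := by
  rintro _ ⟨I, hI, y, rfl⟩ _ ⟨J, hJ, z, rfl⟩ ⟨x, hxy, hxz⟩
  refine ⟨I ∪ J, h𝓘 hI hJ, x, ?_⟩
  rw [← agreeOn_inter_agreeOn, agreeOn_congr hxy, agreeOn_congr hxz]

lemma generateFrom_agreementEvents [Countable S] [MeasurableSpace S] [MeasurableSingletonClass S]
    {𝓘 : Set (Set ι)} (hfin : ∀ I ∈ 𝓘, I.Finite) :
    MeasurableSpace.generateFrom (agreementEvents S 𝓘) = cylinderEvents (⋃₀ 𝓘) := by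
  apply le_antisymm
  · refine MeasurableSpace.generateFrom_le ?_
    rintro _ ⟨I, hI, y, rfl⟩
    rw [show agreeOn I y = ⋂ i ∈ I, (fun x : ι → S => x i) ⁻¹' {y i} by
      ext x; simp [agreeOn, Set.EqOn]]
    exact .biInter (hfin I hI).countable fun i hi =>
      measurable_cylinderEvent_apply (Set.mem_sUnion_of_mem hi hI) (measurableSet_singleton _)
  · refine iSup₂_le fun i ⟨I, hI, hi⟩ => ?_
    have := (hfin I hI).to_subtype
    rintro _ ⟨E, -, rfl⟩
    let r : (ι → S) → I → S := I.domRestrict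
    have hunion : (fun x : ι → S => x i) ⁻¹' E = ⋃ w ∈ r '' {y | y i ∈ E}, r ⁻¹' {w} := by
      ext x
      simp only [Set.biUnion_image, Set.mem_iUnion]
      refine ⟨fun hx => ⟨x, hx, rfl⟩, fun ⟨y, hy, hxy⟩ => ?_⟩
      have hi : x i = y i := congrFun hxy ⟨i, hi⟩
      rwa [Set.mem_preimage, hi]
    rw [hunion]
    refine .biUnion (Set.to_countable _) ?_
    rintro _ ⟨y, -, rfl⟩
    refine MeasurableSpace.measurableSet_generateFrom ⟨I, hI, y, ?_⟩
    ext x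
    exact Set.domRestrict_eq_domRestrict_iff.symm

end Agreement

namespace IsMarkovMeasure

variable {S : Type*} [Fintype S] [MeasurableSpace S]
  {A : S → S → Bool} {P : ℤ → S → S → ℝ} {π : ℤ → S → ℝ} {μ ν : Measure (Seq S)}

lemma real_agreeOn_Icc (hμ : IsMarkovMeasure μ A P π) {a b : ℤ} (hab : a ≤ b) (y : Seq S) :
    μ.real (agreeOn (Set.Icc a b) y) =
      π a (y a) * ∏ i ∈ Finset.Ico a b, P i (y i) (y (i + 1)) := by
  obtain ⟨m, rfl⟩ := Int.le.dest hab
  have hset : agreeOn (Set.Icc a (a + m)) y =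
      {x | ∀ i : Fin (m + 1), x (a - 1 + 1 + ((i : ℕ) : ℤ)) = y (a + (i : ℕ))} := by
    ext x
    refine ⟨fun h i => by simpa using h ⟨by grind, by grind⟩, fun h n hn => ?_⟩
    simpa [hn.1] using h ⟨(n - a).toNat, by grind⟩
  have hprod : ∏ i : Fin m, P (a + (i : ℕ)) (y (a + (i : ℕ))) (y (a + (i : ℕ) + 1)) =
      ∏ i ∈ Finset.Ico a (a + m), P i (y i) (y (i + 1)) := by
    rw [Int.Ico_eq_finset_map, Finset.prod_map]
    simp [Finset.prod_range]
  rw [hset, measureReal_def, hμ.cylinder, ENNReal.toReal_ofReal, ← hprod]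
  · simp [add_assoc]
  · exact mul_nonneg (hμ.dist_nonneg _ _) (Finset.prod_nonneg fun i _ => (hμ.stochastic _).1 _ _)

lemma real_coord (hμ : IsMarkovMeasure μ A P π) (n : ℤ) (s : S) :
    μ.real {x | x n = s} = π n s := by
  simpa [agreeOn] using hμ.real_agreeOn_Icc le_rfl fun _ => s

lemma real_coord_inter_next (hμ : IsMarkovMeasure μ A P π) (n : ℤ) (s t : S) :
    μ.real ({x | x n = s} ∩ {x | x (n + 1) = t}) = π n s * P n s t := by
  have hset : {x | x n = s} ∩ {x | x (n + 1) = t} =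
      agreeOn (Set.Icc n (n + 1)) fun i => if i = n then s else t := by
    ext x
    refine ⟨fun ⟨hn, hn'⟩ i hi => ?_, fun h => ⟨?_, ?_⟩⟩
    · obtain rfl | rfl : i = n ∨ i = n + 1 := by grind
      · simpa using hn
      · simpa using hn'
    · simpa using h ⟨le_rfl, by simp⟩
    · simpa using h ⟨by simp, le_rfl⟩
  rw [hset, hμ.real_agreeOn_Icc (by lia), Finset.Ico_add_one_right_eq_Icc]
  simp

lemma real_agreeOn_Icc_mul_dist (hμ : IsMarkovMeasure μ A P π) {a n b : ℤ} (han : a ≤ n)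
    (hnb : n ≤ b) (y : Seq S) :
    μ.real (agreeOn (Set.Icc a b) y) * π n (y n) =
      μ.real (agreeOn (Set.Icc a n) y) * μ.real (agreeOn (Set.Icc n b) y) := by
  rw [hμ.real_agreeOn_Icc (han.trans hnb), hμ.real_agreeOn_Icc han, hμ.real_agreeOn_Icc hnb,
    ← Finset.Ico_union_Ico_eq_Ico han hnb,
    Finset.prod_union (Finset.Ico_disjoint_Ico_consecutive a n b)]
  ring

lemma real_agreeOn_inter_mul_dist (hμ : IsMarkovMeasure μ A P π) {a n b : ℤ} (han : a ≤ n)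
    (hnb : n ≤ b) {y z : Seq S} (hyz : y n = z n) :
    μ.real (agreeOn (Set.Icc a n) y ∩ agreeOn (Set.Icc n b) z) * π n (y n) =
      μ.real (agreeOn (Set.Icc a n) y) * μ.real (agreeOn (Set.Icc n b) z) := by
  -- Glue `y` on the past to `z` on the future.
  let w : Seq S := fun i => if i ≤ n then y i else z i
  have hwy : Set.EqOn y w (Set.Icc a n) := fun i hi => (if_pos hi.2).symm
  have hwz : Set.EqOn z w (Set.Icc n b) := fun i hi => by
    rcases hi.1.eq_or_lt with rfl | h
    · simp [w, hyz]
    · exact (if_neg h.not_ge).symm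
  rw [agreeOn_congr hwy, agreeOn_congr hwz, agreeOn_inter_agreeOn,
    Set.Icc_union_Icc_eq_Icc han hnb, hwy ⟨han, le_rfl⟩]
  exact hμ.real_agreeOn_Icc_mul_dist han hnb w

lemma real_coord_inter_agreeOn_mul (hμ : IsMarkovMeasure μ A P π) {a n b : ℤ} (han : a ≤ n)
    (hnb : n ≤ b) (s : S) (y z : Seq S) :
    μ.real ({x | x n = s} ∩ (agreeOn (Set.Icc a n) y ∩ agreeOn (Set.Icc n b) z)) *
        μ.real {x | x n = s} =
      μ.real ({x | x n = s} ∩ agreeOn (Set.Icc a n) y) *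
        μ.real ({x | x n = s} ∩ agreeOn (Set.Icc n b) z) := by
  have hn₁ : n ∈ Set.Icc a n := ⟨han, le_rfl⟩
  have hn₂ : n ∈ Set.Icc n b := ⟨le_rfl, hnb⟩
  rw [hμ.real_coord, ← Set.inter_assoc]
  by_cases hy : y n = s
  · by_cases hz : z n = s
    · rw [coord_inter_agreeOn_of_eq hn₁ hy, coord_inter_agreeOn_of_eq hn₂ hz, ← hy]
      exact hμ.real_agreeOn_inter_mul_dist han hnb (hy.trans hz.symm)
    · rw [Set.inter_right_comm, coord_inter_agreeOn_of_ne hn₂ hz]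
      simp
  · rw [coord_inter_agreeOn_of_ne hn₁ hy]
    simp

variable [MeasurableSingletonClass S]

lemma indep_cylinderEvents (hμ : IsMarkovMeasure μ A P π) (n : ℤ) (s : S) :
    Indep (cylinderEvents (Set.Iic n)) (cylinderEvents (Set.Ici n)) μ[|{x | x n = s}] := by
  have := hμ.isProb
  have hpast : ⋃₀ ((Set.Icc · n) '' Set.Iic n) = Set.Iic n := by
    ext i
    simp only [Set.sUnion_image, Set.mem_iUnion, Set.mem_Icc, Set.mem_Iic]
    exact ⟨fun ⟨_, _, h⟩ => h.2, fun h => ⟨i, h, le_rfl, h⟩⟩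
  have hfuture : ⋃₀ (Set.Icc n '' Set.Ici n) = Set.Ici n := by
    ext i
    simp only [Set.sUnion_image, Set.mem_iUnion, Set.mem_Icc, Set.mem_Ici]
    exact ⟨fun ⟨_, _, h⟩ => h.1, fun h => ⟨i, h, h, le_rfl⟩⟩
  refine IndepSets.indep cylinderEvents_le_pi cylinderEvents_le_pi
    (isPiSystem_agreementEvents (𝓘 := (Set.Icc · n) '' Set.Iic n) ?_)
    (isPiSystem_agreementEvents (𝓘 := Set.Icc n '' Set.Ici n) ?_)
    (by rw [generateFrom_agreementEvents, hpast]; simp [Set.finite_Icc])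
    (by rw [generateFrom_agreementEvents, hfuture]; simp [Set.finite_Icc])
    (indepSets_cond_of_real_inter (measurableSet_coord n s) ?_)
  · rintro _ ⟨a, ha, rfl⟩ _ ⟨b, -, rfl⟩
    exact ⟨a ⊓ b, Set.mem_Iic.2 (min_le_of_left_le ha),
      Antitone.map_inf (fun _ _ h => Set.Icc_subset_Icc_left h) a b⟩
  · rintro _ ⟨a, ha, rfl⟩ _ ⟨b, -, rfl⟩
    exact ⟨a ⊔ b, Set.mem_Ici.2 (le_max_of_le_left ha),
      Monotone.map_sup (fun _ _ h => Set.Icc_subset_Icc_right h) a b⟩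
  · rintro _ ⟨_, ⟨a, ha, rfl⟩, y, rfl⟩ _ ⟨_, ⟨b, hb, rfl⟩, z, rfl⟩
    exact hμ.real_coord_inter_agreeOn_mul ha hb s y z

lemma real_cond_next (hμ : IsMarkovMeasure μ A P π) {n : ℤ} {s : S} (hs : 0 < π n s) (t : S) :
    μ[|{x | x n = s}].real {x | x (n + 1) = t} = P n s t := by
  have := hμ.isProb
  have h := real_cond_mul_eq_real_inter (μ := μ) (measurableSet_coord n s) {x | x (n + 1) = t}
  rw [hμ.real_coord_inter_next, hμ.real_coord, mul_comm] at h
  exact mul_left_cancel₀ hs.ne' h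

lemma real_cond_prev (hμ : IsMarkovMeasure μ A P π) {n : ℤ} {s : S} (hs : 0 < π n s) (t : S) :
    μ[|{x | x n = s}].real {x | x (n - 1) = t} = reverseP P π n s t := by
  have := hμ.isProb
  have h := real_cond_mul_eq_real_inter (μ := μ) (measurableSet_coord n s) {x | x (n - 1) = t}
  have hpair := hμ.real_coord_inter_next (n - 1) t s
  rw [sub_add_cancel, Set.inter_comm] at hpair
  rw [reverseP, if_pos hs, eq_div_iff hs.ne', ← hpair, ← h, hμ.real_coord]

lemma tendsto_real_cond_next_sub (hμ : IsMarkovMeasure μ A P π) [IsFiniteMeasure ν] (hνμ : ν ≪ μ)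
    {s : S} {c : ℝ} (hc : 0 < c) (hν : ∀ n, c ≤ ν.real {x | x n = s}) (t : S) :
    Tendsto (fun n : ℕ => ν[|{x | x n = s}].real {x | x (n + 1) = t} -
      μ[|{x | x n = s}].real {x | x (n + 1) = t}) atTop (𝓝 0) := by
  have := hμ.isProb
  have hfuture (j : ℕ) : MeasurableSet[cylinderEvents (Set.Ici (j : ℤ))]
      {x : Seq S | x (j + 1) = t} := measurableSet_cylinderEvents_coord (by simp) t
  rw [← Nat.cofinite_eq_atTop]
  refine tendsto_real_cond_sub_real_cond hνμ (B := fun n : ℕ => {x | x n = s})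
    (C := fun n : ℕ => {x | x (n + 1) = t}) (fun _ => measurableSet_coord _ _)
    (fun _ => measurableSet_coord _ _) (fun i j hij => ?_) (fun i j hij => ?_) hc fun n => hν n
  · exact (hμ.indep_cylinderEvents j s).symm.indepSet_of_measurableSet (hfuture j)
      (measurableSet_cylinderEvents_coord (by simp; lia) s)
  · exact (hμ.indep_cylinderEvents j s).symm.indepSet_of_measurableSet (hfuture j)
      ((measurableSet_cylinderEvents_coord (by simp; lia) s).inter
        (measurableSet_cylinderEvents_coord (by simp; lia) t))

lemma tendsto_real_cond_prev_sub (hμ : IsMarkovMeasure μ A P π) [IsFiniteMeasure ν] (hνμ : ν ≪ μ)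
    {s : S} {c : ℝ} (hc : 0 < c) (hν : ∀ n, c ≤ ν.real {x | x n = s}) (t : S) :
    Tendsto (fun n : ℕ => ν[|{x | x (-n) = s}].real {x | x (-n - 1) = t} -
      μ[|{x | x (-n) = s}].real {x | x (-n - 1) = t}) atTop (𝓝 0) := by
  have := hμ.isProb
  have hpast (j : ℕ) : MeasurableSet[cylinderEvents (Set.Iic (-j : ℤ))]
      {x : Seq S | x (-j - 1) = t} := measurableSet_cylinderEvents_coord (by simp) t
  rw [← Nat.cofinite_eq_atTop]
  refine tendsto_real_cond_sub_real_cond hνμ (B := fun n : ℕ => {x | x (-n) = s})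
    (C := fun n : ℕ => {x | x (-n - 1) = t}) (fun _ => measurableSet_coord _ _)
    (fun _ => measurableSet_coord _ _) (fun i j hij => ?_) (fun i j hij => ?_) hc fun n => hν (-n)
  · exact (hμ.indep_cylinderEvents (-j) s).indepSet_of_measurableSet (hpast j)
      (measurableSet_cylinderEvents_coord (by simp; lia) s)
  · exact (hμ.indep_cylinderEvents (-j) s).indepSet_of_measurableSet (hpast j)
      ((measurableSet_cylinderEvents_coord (by simp; lia) s).inter
        (measurableSet_cylinderEvents_coord (by simp; lia) t))

end IsMarkovMeasure

section Shift

variable {S : Type*} [MeasurableSpace S]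

lemma measurable_shiftMap : Measurable (shiftMap : Seq S → Seq S) :=
  measurable_pi_lambda _ fun n => measurable_pi_apply (n + 1)

lemma real_cond_map_shiftMap [MeasurableSingletonClass S] (μ : Measure (Seq S)) (m n : ℤ)
    (s t : S) :
    (μ.map shiftMap)[|{x | x n = s}].real {x | x m = t} =
      μ[|{x | x (n + 1) = s}].real {x | x (m + 1) = t} := by
  have hn := measurableSet_coord n s
  have hm := measurableSet_coord m t
  simp only [measureReal_def, cond_apply hn, cond_apply (measurableSet_coord (n + 1) s),
    Measure.map_apply measurable_shiftMap hn, Measure.map_apply measurable_shiftMap (hn.inter hm)]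
  rfl

end Shift

namespace IsMarkovMeasure

variable {S : Type*} [Fintype S] [MeasurableSpace S]
  {A : S → S → Bool} {P : ℤ → S → S → ℝ} {π : ℤ → S → ℝ} {μ : Measure (Seq S)}

lemma dist_mul_le_dist_succ (hμ : IsMarkovMeasure μ A P π) (n : ℤ) (s t : S) :
    π n s * P n s t ≤ π (n + 1) t := by
  rw [← hμ.consistent]
  exact Finset.single_le_sum (f := fun q => π n q * P n q t)
    (fun q _ => mul_nonneg (hμ.dist_nonneg _ _) ((hμ.stochastic _).1 _ _)) (Finset.mem_univ s)

lemma dist_mul_pow_le_dist_add (hμ : IsMarkovMeasure μ A P π) {δ : ℝ} (hδ : 0 ≤ δ) {n : ℤ}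
    {u : ℕ → S} {m : ℕ} (hu : ∀ i < m, δ ≤ P (n + i) (u i) (u (i + 1))) :
    π n (u 0) * δ ^ m ≤ π (n + m) (u m) := by
  induction m with
  | zero => simp
  | succ m ih => calc
      π n (u 0) * δ ^ (m + 1) = π n (u 0) * δ ^ m * δ := by ring
      _ ≤ π (n + m) (u m) * P (n + m) (u m) (u (m + 1)) :=
        mul_le_mul (ih fun i hi => hu i (by lia)) (hu m (by lia)) hδ (hμ.dist_nonneg _ _)
      _ ≤ π (n + (m + 1 : ℕ)) (u (m + 1)) := by
        simpa [add_assoc] using hμ.dist_mul_le_dist_succ (n + m) (u m) (u (m + 1))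

lemma exists_pos_le_dist (hμ : IsMarkovMeasure μ A P π) (hA : IsPrimitive A) (hD : Doeblin A P) :
    ∃ c : ℝ, 0 < c ∧ ∀ n s, c ≤ π n s := by
  obtain ⟨M, -, hM⟩ := hA
  obtain ⟨δ, hδ, hP⟩ := hD
  have : Nonempty S := by
    by_contra! h
    simpa using hμ.dist_sum 0
  refine ⟨δ ^ M / Fintype.card S, by positivity, fun n s => ?_⟩
  have hpath (r : S) : π (n - M) r * δ ^ M ≤ π n s := by
    obtain ⟨u, rfl, rfl, hu⟩ := hM r s
    simpa using hμ.dist_mul_pow_le_dist_add hδ.le (n := n - M) fun i hi => (hP _ _ _).2 (hu i hi)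
  calc δ ^ M / Fintype.card S = (∑ r, π (n - M) r * δ ^ M) / Fintype.card S := by
        rw [← Finset.sum_mul, hμ.dist_sum, one_mul]
    _ ≤ (∑ _r : S, π n s) / Fintype.card S := by gcongr; exact hpath _
    _ = π n s := by simp

end IsMarkovMeasure

theorem transition_differences_tendsto_zero_of_nonsingular_general
    {S : Type*} [Fintype S] [MeasurableSpace S] [MeasurableSingletonClass S]
    {A : S → S → Bool} {P : ℤ → S → S → ℝ} {π : ℤ → S → ℝ} {μ : Measure (Seq S)}
    (hμ : IsMarkovMeasure μ A P π) (hac : μ.map shiftMap ≪ μ)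
    {s : S} {c : ℝ} (hc : 0 < c) (hπ : ∀ n, c ≤ π n s) (t : S) :
    Tendsto (fun n : ℕ => P ((n : ℤ) - 1) s t - P (n : ℤ) s t) atTop (𝓝 0) ∧
      Tendsto (fun n : ℕ => reverseP P π (-(n : ℤ)) s t - reverseP P π (-((n : ℤ) + 1)) s t)
        atTop (𝓝 0) := by
  have := hμ.isProb
  have hs (n : ℤ) : 0 < π n s := hc.trans_le (hπ n)
  have hν (n : ℤ) : c ≤ (μ.map shiftMap).real {x | x n = s} := by
    rw [map_measureReal_apply measurable_shiftMap (measurableSet_coord n s)]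
    exact (hπ (n + 1)).trans_eq (hμ.real_coord (n + 1) s).symm
  have hnext (n : ℤ) : (μ.map shiftMap)[|{x | x n = s}].real {x | x (n + 1) = t} =
      P (n + 1) s t := by
    rw [real_cond_map_shiftMap, hμ.real_cond_next (hs _)]
  have hprev (n : ℤ) : (μ.map shiftMap)[|{x | x n = s}].real {x | x (n - 1) = t} =
      reverseP P π (n + 1) s t := by
    rw [real_cond_map_shiftMap, sub_add_eq_add_sub, hμ.real_cond_prev (hs _)]
  have hforward := hμ.tendsto_real_cond_next_sub hac hc hν t
  have hbackward := hμ.tendsto_real_cond_prev_sub hac hc hν t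
  simp only [hnext, hμ.real_cond_next (hs _)] at hforward
  simp only [hprev, hμ.real_cond_prev (hs _)] at hbackward
  refine ⟨(tendsto_add_atTop_iff_nat 1).1 ?_, ?_⟩
  · simpa using hforward.neg
  · simpa [add_comm] using (tendsto_add_atTop_iff_nat 1).2 hbackward

/-- **Corollary (nonsingularity of the shift).**
If the shift is nonsingular with respect to a Markov measure with the Doeblin
condition on a topologically mixing SFT, then `P_{n-1}(s,t) − P_n(s,t) → 0` and
`P̂_{-n}(s,t) − P̂_{-(n+1)}(s,t) → 0` as `n → ∞`, for all `s, t`. -/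
theorem transition_differences_tendsto_zero_of_nonsingular
    {S : Type*} [Fintype S] [MeasurableSpace S] [MeasurableSingletonClass S]
    (A : S → S → Bool) (hA : IsPrimitive A)
    (P : ℤ → S → S → ℝ) (π : ℤ → S → ℝ) (μ : Measure (Seq S))
    (hμ : IsMarkovMeasure μ A P π) (hD : Doeblin A P)
    (hns : ShiftNonsingular μ) :
    ∀ s t : S,
      Tendsto (fun n : ℕ => P ((n : ℤ) - 1) s t - P (n : ℤ) s t) atTop (𝓝 0) ∧
      Tendsto (fun n : ℕ =>
          reverseP P π (-(n : ℤ)) s t - reverseP P π (-((n : ℤ) + 1)) s t)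
        atTop (𝓝 0) := by
  obtain ⟨c, hc, hπ⟩ := hμ.exists_pos_le_dist hA hD
  exact fun s t => transition_differences_tendsto_zero_of_nonsingular_general hμ hns.1 hc
    (fun n => hπ n s) t

end MarkovSFT
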